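/- For a joint distribution P on 𝒳 × 𝒴 × 𝒵, ŨI(X:Y∖Z) = 0 if and only if there exists a row-stochastic matrix λ : 𝒵 × 𝒴 → [0,1] (i.e. λ(z;y) ≥ 0 and Σ_y λ(z;y) = 1 for every z) such that P(X=x, Y=y) = Σ_z P(X=x, Z=z)·λ(z;y) for all x ∈ 𝒳 and y ∈ 𝒴, where P(X=x,Y=y) = Σ_z P(x,y,z) and P(X=x,Z=z) = Σ_y P(x,y,z). -/

import Mathlib

/-!
`MI_Q(X:Y|Z)` is the relative entropy of `Q` with respect to
`R(x,y,z) = Q(x,z) Q(y,z) / Q(z)`, so it is nonnegative and vanishes exactly when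
`Q(x,y,z) Q(z) = Q(x,z) Q(y,z)`, i.e. when `X` and `Y` are conditionally independent given `Z`
(`miXY_Z_nonneg`, `eq_of_miXY_Z_eq_zero`; both come from the termwise bound
`q - a * b / m ≤ q * log (q * m / (a * b))`).

`Δ_P` is compact and, by the chain rule, `MI_Q(X:Y|Z)` is a combination of functions `t * log t`
of marginals of `Q`, hence continuous on `Δ_P`. So the infimum is attained. If it is `0`, a minimiser
`Q` is conditionally independent and `λ(z;y) = Q(y|z)` is the required matrix. Conversely, a matrix
`λ` yields the element `Q(x,y,z) = P(x,z) λ(z;y)` of `Δ_P`, whose conditional mutual information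
is `0`.
-/

open scoped BigOperators
open Real

namespace PID

variable {𝒳 𝒴 𝒵 : Type*} [Fintype 𝒳] [Fintype 𝒴] [Fintype 𝒵]

/-- A joint distribution on `𝒳 × 𝒴 × 𝒵`: nonnegative values summing to 1. -/
def IsDist (P : 𝒳 × 𝒴 × 𝒵 → ℝ) : Prop :=
  (∀ p, 0 ≤ P p) ∧ ∑ p, P p = 1

noncomputable def margX (P : 𝒳 × 𝒴 × 𝒵 → ℝ) (x : 𝒳) : ℝ := ∑ y, ∑ z, P (x, y, z)
noncomputable def margY (P : 𝒳 × 𝒴 × 𝒵 → ℝ) (y : 𝒴) : ℝ := ∑ x, ∑ z, P (x, y, z)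
noncomputable def margZ (P : 𝒳 × 𝒴 × 𝒵 → ℝ) (z : 𝒵) : ℝ := ∑ x, ∑ y, P (x, y, z)
noncomputable def margXY (P : 𝒳 × 𝒴 × 𝒵 → ℝ) (x : 𝒳) (y : 𝒴) : ℝ := ∑ z, P (x, y, z)
noncomputable def margXZ (P : 𝒳 × 𝒴 × 𝒵 → ℝ) (x : 𝒳) (z : 𝒵) : ℝ := ∑ y, P (x, y, z)
noncomputable def margYZ (P : 𝒳 × 𝒴 × 𝒵 → ℝ) (y : 𝒴) (z : 𝒵) : ℝ := ∑ x, P (x, y, z)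

/-- Mutual information `MI(X:Y)`. -/
noncomputable def miXY (P : 𝒳 × 𝒴 × 𝒵 → ℝ) : ℝ :=
  ∑ x, ∑ y, margXY P x y * Real.log (margXY P x y / (margX P x * margY P y))

/-- Mutual information `MI(X:Z)`. -/
noncomputable def miXZ (P : 𝒳 × 𝒴 × 𝒵 → ℝ) : ℝ :=
  ∑ x, ∑ z, margXZ P x z * Real.log (margXZ P x z / (margX P x * margZ P z))

/-- Mutual information `MI(Y:Z)`. -/
noncomputable def miYZ (P : 𝒳 × 𝒴 × 𝒵 → ℝ) : ℝ :=
  ∑ y, ∑ z, margYZ P y z * Real.log (margYZ P y z / (margY P y * margZ P z))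

/-- Mutual information `MI(X:(Y,Z))`. -/
noncomputable def miXYZ (P : 𝒳 × 𝒴 × 𝒵 → ℝ) : ℝ :=
  ∑ x, ∑ y, ∑ z, P (x, y, z) * Real.log (P (x, y, z) / (margX P x * margYZ P y z))

/-- Conditional mutual information `MI(X:Y|Z)`. -/
noncomputable def miXY_Z (P : 𝒳 × 𝒴 × 𝒵 → ℝ) : ℝ :=
  ∑ x, ∑ y, ∑ z, P (x, y, z) *
    Real.log (P (x, y, z) * margZ P z / (margXZ P x z * margYZ P y z))

/-- Conditional mutual information `MI(X:Z|Y)`. -/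
noncomputable def miXZ_Y (P : 𝒳 × 𝒴 × 𝒵 → ℝ) : ℝ :=
  ∑ x, ∑ y, ∑ z, P (x, y, z) *
    Real.log (P (x, y, z) * margY P y / (margXY P x y * margYZ P y z))

/-- Conditional mutual information `MI(Y:Z|X)`. -/
noncomputable def miYZ_X (P : 𝒳 × 𝒴 × 𝒵 → ℝ) : ℝ :=
  ∑ x, ∑ y, ∑ z, P (x, y, z) *
    Real.log (P (x, y, z) * margX P x / (margXY P x y * margXZ P x z))

/-- Conditional entropy `H(X|Y,Z)`. -/
noncomputable def hX_YZ (P : 𝒳 × 𝒴 × 𝒵 → ℝ) : ℝ :=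
  -∑ x, ∑ y, ∑ z, P (x, y, z) * Real.log (P (x, y, z) / margYZ P y z)

/-- Conditional entropy `H(X|Z)`. -/
noncomputable def hX_Z (P : 𝒳 × 𝒴 × 𝒵 → ℝ) : ℝ :=
  -∑ x, ∑ z, margXZ P x z * Real.log (margXZ P x z / margZ P z)

/-- Conditional entropy `H(Y|Z)`. -/
noncomputable def hY_Z (P : 𝒳 × 𝒴 × 𝒵 → ℝ) : ℝ :=
  -∑ y, ∑ z, margYZ P y z * Real.log (margYZ P y z / margZ P z)

/-- Conditional entropy `H(Z|Y)`. -/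
noncomputable def hZ_Y (P : 𝒳 × 𝒴 × 𝒵 → ℝ) : ℝ :=
  -∑ y, ∑ z, margYZ P y z * Real.log (margYZ P y z / margY P y)

/-- Co-information `CoI(X;Y;Z) = MI(X:Y) − MI(X:Y|Z)`. -/
noncomputable def coI (P : 𝒳 × 𝒴 × 𝒵 → ℝ) : ℝ := miXY P - miXY_Z P

/-- `Δ_P`: the joint distributions with the same pair marginals as `P` on `(X,Y)` and `(X,Z)`. -/
def ΔP (P : 𝒳 × 𝒴 × 𝒵 → ℝ) : Set (𝒳 × 𝒴 × 𝒵 → ℝ) :=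
  {Q | IsDist Q ∧ (∀ x y, margXY Q x y = margXY P x y) ∧ ∀ x z, margXZ Q x z = margXZ P x z}

/-- `ŨI(X:Y∖Z) = min_{Q ∈ Δ_P} MI_Q(X:Y|Z)`. -/
noncomputable def UIY (P : 𝒳 × 𝒴 × 𝒵 → ℝ) : ℝ := sInf (miXY_Z '' ΔP P)

/-- `ŨI(X:Z∖Y) = min_{Q ∈ Δ_P} MI_Q(X:Z|Y)`. -/
noncomputable def UIZ (P : 𝒳 × 𝒴 × 𝒵 → ℝ) : ℝ := sInf (miXZ_Y '' ΔP P)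

/-- `S̃I(X:Y;Z) = max_{Q ∈ Δ_P} CoI_Q(X;Y;Z)`. -/
noncomputable def SI (P : 𝒳 × 𝒴 × 𝒵 → ℝ) : ℝ := sSup (coI '' ΔP P)

/-- `C̃I(X:Y;Z) = MI_P(X:(Y,Z)) − min_{Q ∈ Δ_P} MI_Q(X:(Y,Z))`. -/
noncomputable def CI (P : 𝒳 × 𝒴 × 𝒵 → ℝ) : ℝ := miXYZ P - sInf (miXYZ '' ΔP P)

section Aux

variable {Q : 𝒳 × 𝒴 × 𝒵 → ℝ}

/-! ### Elementary facts about marginals -/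

lemma le_margXZ (hQ : ∀ p, 0 ≤ Q p) (x : 𝒳) (y : 𝒴) (z : 𝒵) : Q (x, y, z) ≤ margXZ Q x z :=
  Finset.single_le_sum (f := fun y => Q (x, y, z)) (fun _ _ => hQ _) (Finset.mem_univ y)

lemma le_margYZ (hQ : ∀ p, 0 ≤ Q p) (x : 𝒳) (y : 𝒴) (z : 𝒵) : Q (x, y, z) ≤ margYZ Q y z :=
  Finset.single_le_sum (f := fun x => Q (x, y, z)) (fun _ _ => hQ _) (Finset.mem_univ x)

lemma margXZ_nonneg (hQ : ∀ p, 0 ≤ Q p) (x : 𝒳) (z : 𝒵) : 0 ≤ margXZ Q x z :=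
  Finset.sum_nonneg fun _ _ => hQ _

lemma margYZ_nonneg (hQ : ∀ p, 0 ≤ Q p) (y : 𝒴) (z : 𝒵) : 0 ≤ margYZ Q y z :=
  Finset.sum_nonneg fun _ _ => hQ _

lemma sum_margXZ (Q : 𝒳 × 𝒴 × 𝒵 → ℝ) (z : 𝒵) : ∑ x, margXZ Q x z = margZ Q z := rfl

lemma sum_margYZ (Q : 𝒳 × 𝒴 × 𝒵 → ℝ) (z : 𝒵) : ∑ y, margYZ Q y z = margZ Q z :=
  Finset.sum_comm

lemma margXZ_le_margZ (hQ : ∀ p, 0 ≤ Q p) (x : 𝒳) (z : 𝒵) : margXZ Q x z ≤ margZ Q z :=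
  Finset.single_le_sum (f := fun x => margXZ Q x z) (fun _ _ => margXZ_nonneg hQ _ _)
    (Finset.mem_univ x)

/-! ### Nonnegativity and the equality case -/

/-- Tangent-line bound for one term of the relative entropy, with its equality case. -/
lemma term_bound {q m a b : ℝ} (hq : 0 ≤ q) (hqa : q ≤ a) (hqb : q ≤ b) (ham : a ≤ m) :
    q - a * b / m ≤ q * Real.log (q * m / (a * b)) ∧
      (q * Real.log (q * m / (a * b)) = q - a * b / m → q * m = a * b) := by
  rcases hq.eq_or_lt with rfl | hq
  · have h : 0 ≤ a * b / m := div_nonneg (mul_nonneg hqa hqb) (hqa.trans ham)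
    refine ⟨by simpa using h, fun h => ?_⟩
    have h' : a * b / m = 0 := by simpa using h.symm
    rcases div_eq_zero_iff.1 h' with h' | h'
    · simp [h']
    · have : a = 0 := le_antisymm (ham.trans h'.le) hqa
      simp [this]
  · have ha : 0 < a := hq.trans_le hqa
    have hb : 0 < b := hq.trans_le hqb
    have hm : 0 < m := ha.trans_le ham
    have ht : 0 < a * b / (q * m) := by positivity
    have hlog : Real.log (q * m / (a * b)) = -Real.log (a * b / (q * m)) := by
      rw [← Real.log_inv, inv_div]
    have hmul : q * (a * b / (q * m) - 1) = a * b / m - q := by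
      field_simp
    rw [hlog]
    constructor
    · have := mul_le_mul_of_nonneg_left (Real.log_le_sub_one_of_pos ht) hq.le
      linarith
    · intro h
      by_contra hne
      have h1 : a * b / (q * m) ≠ 1 := fun h1 =>
        hne ((div_eq_one_iff_eq (by positivity)).1 h1).symm
      have := mul_lt_mul_of_pos_left (Real.log_lt_sub_one_of_pos ht h1) hq
      linarith

/-- `Q` and `Q(x,z) Q(y,z) / Q(z)` have the same total mass. -/
lemma sum_sub_eq_zero (Q : 𝒳 × 𝒴 × 𝒵 → ℝ) :
    ∑ x, ∑ y, ∑ z, (Q (x, y, z) - margXZ Q x z * margYZ Q y z / margZ Q z) = 0 := by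
  have h1 : ∑ x, ∑ y, ∑ z, Q (x, y, z) = ∑ z, margZ Q z := by
    simp only [margZ]
    rw [Finset.sum_comm (s := (Finset.univ : Finset 𝒵))]
    exact Finset.sum_congr rfl fun x _ => Finset.sum_comm
  have h2 : ∑ x, ∑ y, ∑ z, margXZ Q x z * margYZ Q y z / margZ Q z = ∑ z, margZ Q z := by
    calc ∑ x, ∑ y, ∑ z, margXZ Q x z * margYZ Q y z / margZ Q z
        = ∑ x, ∑ z, ∑ y, margXZ Q x z * margYZ Q y z / margZ Q z :=
          Finset.sum_congr rfl fun x _ => Finset.sum_comm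
      _ = ∑ z, ∑ x, ∑ y, margXZ Q x z * margYZ Q y z / margZ Q z := Finset.sum_comm
      _ = ∑ z, margZ Q z := by
          refine Finset.sum_congr rfl fun z _ => ?_
          simp only [← Finset.sum_div, ← Finset.mul_sum, sum_margYZ]
          rw [← Finset.sum_mul, sum_margXZ, mul_self_div_self]
  simp only [Finset.sum_sub_distrib]
  rw [h1, h2, sub_self]

lemma miXY_Z_eq_sum_gap (Q : 𝒳 × 𝒴 × 𝒵 → ℝ) :
    miXY_Z Q = ∑ x, ∑ y, ∑ z, (Q (x, y, z) *
      Real.log (Q (x, y, z) * margZ Q z / (margXZ Q x z * margYZ Q y z)) -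
        (Q (x, y, z) - margXZ Q x z * margYZ Q y z / margZ Q z)) := by
  have h := sum_sub_eq_zero Q
  simp only [Finset.sum_sub_distrib] at h ⊢
  rw [h, sub_zero, miXY_Z]

lemma gap_nonneg (hQ : ∀ p, 0 ≤ Q p) (x : 𝒳) (y : 𝒴) (z : 𝒵) :
    0 ≤ Q (x, y, z) *
      Real.log (Q (x, y, z) * margZ Q z / (margXZ Q x z * margYZ Q y z)) -
        (Q (x, y, z) - margXZ Q x z * margYZ Q y z / margZ Q z) :=
  sub_nonneg.2 (term_bound (hQ _) (le_margXZ hQ x y z) (le_margYZ hQ x y z)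
    (margXZ_le_margZ hQ x z)).1

lemma miXY_Z_nonneg (hQ : ∀ p, 0 ≤ Q p) : 0 ≤ miXY_Z Q := by
  rw [miXY_Z_eq_sum_gap]
  exact Finset.sum_nonneg fun x _ => Finset.sum_nonneg fun y _ => Finset.sum_nonneg fun z _ =>
    gap_nonneg hQ x y z

/-- Vanishing conditional mutual information forces conditional independence. -/
lemma eq_of_miXY_Z_eq_zero (hQ : ∀ p, 0 ≤ Q p) (h : miXY_Z Q = 0) (x : 𝒳) (y : 𝒴) (z : 𝒵) :
    Q (x, y, z) * margZ Q z = margXZ Q x z * margYZ Q y z := by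
  rw [miXY_Z_eq_sum_gap] at h
  have hx := (Finset.sum_eq_zero_iff_of_nonneg fun x _ => Finset.sum_nonneg fun y _ =>
    Finset.sum_nonneg fun z _ => gap_nonneg hQ x y z).1 h x (Finset.mem_univ x)
  have hy := (Finset.sum_eq_zero_iff_of_nonneg fun y _ =>
    Finset.sum_nonneg fun z _ => gap_nonneg hQ x y z).1 hx y (Finset.mem_univ y)
  have hz := (Finset.sum_eq_zero_iff_of_nonneg fun z _ => gap_nonneg hQ x y z).1 hy z
    (Finset.mem_univ z)
  exact (term_bound (hQ _) (le_margXZ hQ x y z) (le_margYZ hQ x y z)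
    (margXZ_le_margZ hQ x z)).2 (sub_eq_zero.1 hz)

/-! ### Continuity and compactness -/

/-- Chain rule: conditional mutual information as a combination of entropies. -/
lemma miXY_Z_eq_entropies (hQ : ∀ p, 0 ≤ Q p) :
    miXY_Z Q = ∑ x, ∑ y, ∑ z, Q (x, y, z) * Real.log (Q (x, y, z))
      + ∑ z, margZ Q z * Real.log (margZ Q z)
      - ∑ x, ∑ z, margXZ Q x z * Real.log (margXZ Q x z)
      - ∑ y, ∑ z, margYZ Q y z * Real.log (margYZ Q y z) := by
  have h1 : ∑ x, ∑ y, ∑ z, Q (x, y, z) * Real.log (margZ Q z)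
      = ∑ z, margZ Q z * Real.log (margZ Q z) := by
    calc ∑ x, ∑ y, ∑ z, Q (x, y, z) * Real.log (margZ Q z)
        = ∑ x, ∑ z, ∑ y, Q (x, y, z) * Real.log (margZ Q z) :=
          Finset.sum_congr rfl fun x _ => Finset.sum_comm
      _ = ∑ z, ∑ x, ∑ y, Q (x, y, z) * Real.log (margZ Q z) := Finset.sum_comm
      _ = _ := by simp only [← Finset.sum_mul]; rfl
  have h2 : ∑ x, ∑ y, ∑ z, Q (x, y, z) * Real.log (margXZ Q x z)
      = ∑ x, ∑ z, margXZ Q x z * Real.log (margXZ Q x z) := by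
    refine Finset.sum_congr rfl fun x _ => ?_
    rw [Finset.sum_comm]
    simp only [← Finset.sum_mul]; rfl
  have h3 : ∑ x, ∑ y, ∑ z, Q (x, y, z) * Real.log (margYZ Q y z)
      = ∑ y, ∑ z, margYZ Q y z * Real.log (margYZ Q y z) := by
    rw [Finset.sum_comm]
    refine Finset.sum_congr rfl fun y _ => ?_
    rw [Finset.sum_comm]
    simp only [← Finset.sum_mul]; rfl
  rw [← h1, ← h2, ← h3, miXY_Z]
  simp only [← Finset.sum_add_distrib, ← Finset.sum_sub_distrib]
  refine Finset.sum_congr rfl fun x _ => Finset.sum_congr rfl fun y _ =>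
    Finset.sum_congr rfl fun z _ => ?_
  rcases (hQ (x, y, z)).eq_or_lt with h | h
  · simp [← h]
  · have ha := h.trans_le (le_margXZ hQ x y z)
    have hb := h.trans_le (le_margYZ hQ x y z)
    have hm := ha.trans_le (margXZ_le_margZ hQ x z)
    rw [Real.log_div (by positivity) (by positivity), Real.log_mul h.ne' hm.ne',
      Real.log_mul ha.ne' hb.ne']
    ring

lemma continuousOn_miXY_Z (P : 𝒳 × 𝒴 × 𝒵 → ℝ) : ContinuousOn miXY_Z (ΔP P) := by
  have hc : Continuous fun Q : 𝒳 × 𝒴 × 𝒵 → ℝ =>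
      ∑ x, ∑ y, ∑ z, Q (x, y, z) * Real.log (Q (x, y, z))
      + ∑ z, margZ Q z * Real.log (margZ Q z)
      - ∑ x, ∑ z, margXZ Q x z * Real.log (margXZ Q x z)
      - ∑ y, ∑ z, margYZ Q y z * Real.log (margYZ Q y z) := by
    -- `t * log t` is continuous at `0` although `log` is not, hence the explicit compositions.
    refine ((Continuous.add ?_ ?_).sub ?_).sub ?_
    · exact continuous_finsetSum _ fun x _ => continuous_finsetSum _ fun y _ =>
        continuous_finsetSum _ fun z _ => Real.continuous_mul_log.comp (continuous_apply _)
    · refine continuous_finsetSum _ fun z _ => Real.continuous_mul_log.comp ?_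
      unfold margZ; fun_prop
    · refine continuous_finsetSum _ fun x _ => continuous_finsetSum _ fun z _ =>
        Real.continuous_mul_log.comp ?_
      unfold margXZ; fun_prop
    · refine continuous_finsetSum _ fun y _ => continuous_finsetSum _ fun z _ =>
        Real.continuous_mul_log.comp ?_
      unfold margYZ; fun_prop
  exact hc.continuousOn.congr fun Q hQ => miXY_Z_eq_entropies hQ.1.1

lemma isCompact_ΔP (P : 𝒳 × 𝒴 × 𝒵 → ℝ) : IsCompact (ΔP P) := by
  refine (isCompact_Icc (a := (0 : 𝒳 × 𝒴 × 𝒵 → ℝ)) (b := 1)).of_isClosed_subset ?_ ?_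
  · simp only [ΔP, IsDist, margXY, margXZ, Set.ofPred_and, Set.ofPred_forall]
    refine ((isClosed_iInter fun p => ?_).inter ?_).inter
      ((isClosed_iInter fun x => isClosed_iInter fun y => ?_).inter
        (isClosed_iInter fun x => isClosed_iInter fun z => ?_))
    · exact isClosed_le continuous_const (continuous_apply p)
    all_goals exact isClosed_eq (by fun_prop) continuous_const
  · intro Q hQ
    refine ⟨fun p => hQ.1.1 p, fun p => ?_⟩
    have h := Finset.single_le_sum (f := Q) (fun p _ => hQ.1.1 p) (Finset.mem_univ p)
    rw [hQ.1.2] at h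
    exact h

end Aux

/-- `ŨI(X:Y∖Z) = 0` iff the `(X,Y)`-marginal is obtained from the
`(X,Z)`-marginal by a row-stochastic matrix `λ : 𝒵 × 𝒴 → [0,1]`. -/
theorem stmt4 [Nonempty 𝒳] [Nonempty 𝒴] [Nonempty 𝒵]
    (P : 𝒳 × 𝒴 × 𝒵 → ℝ) (hP : IsDist P) :
    UIY P = 0 ↔ ∃ lam : 𝒵 → 𝒴 → ℝ,
      (∀ z y, 0 ≤ lam z y) ∧ (∀ z, ∑ y, lam z y = 1) ∧
      ∀ x y, margXY P x y = ∑ z, margXZ P x z * lam z y := by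
  constructor
  · intro h
    have hne : (ΔP P).Nonempty := ⟨P, hP, fun _ _ => rfl, fun _ _ => rfl⟩
    obtain ⟨Q, hQ, hmin⟩ := (isCompact_ΔP P).exists_sInf_image_eq hne (continuousOn_miXY_Z P)
    have hQ0 : miXY_Z Q = 0 := hmin.symm.trans h
    have hnn := hQ.1.1
    classical
    obtain ⟨y₀⟩ := ‹Nonempty 𝒴›
    -- On the null set `Q(z) = 0` any probability vector serves as the row `λ(z; ·)`.
    refine ⟨fun z y => if margZ Q z = 0 then (if y = y₀ then 1 else 0)
      else margYZ Q y z / margZ Q z, fun z y => ?_, fun z => ?_, fun x y => ?_⟩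
    · have hm : 0 ≤ margZ Q z := Finset.sum_nonneg fun x _ => margXZ_nonneg hnn x z
      have hb := margYZ_nonneg hnn y z
      dsimp only
      split_ifs <;> positivity
    · by_cases hz : margZ Q z = 0
      · simp [hz]
      · simp only [hz, if_false]
        rw [← Finset.sum_div, sum_margYZ, div_self hz]
    · rw [← hQ.2.1 x y, margXY]
      refine Finset.sum_congr rfl fun z _ => ?_
      rw [← hQ.2.2 x z]
      by_cases hz : margZ Q z = 0
      · have ha : margXZ Q x z = 0 :=
          le_antisymm ((margXZ_le_margZ hnn x z).trans hz.le) (margXZ_nonneg hnn x z)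
        rw [ha, zero_mul]
        exact le_antisymm ((le_margXZ hnn x y z).trans ha.le) (hnn _)
      · simp only [hz, if_false]
        rw [← mul_div_assoc, eq_div_iff hz]
        exact eq_of_miXY_Z_eq_zero hnn hQ0 x y z
  · rintro ⟨lam, hnn, hsum, hXY⟩
    let Q : 𝒳 × 𝒴 × 𝒵 → ℝ := fun p => margXZ P p.1 p.2.2 * lam p.2.2 p.2.1
    have hQnn : ∀ p, 0 ≤ Q p := fun p => mul_nonneg (margXZ_nonneg hP.1 _ _) (hnn _ _)
    have hXZ : ∀ x z, margXZ Q x z = margXZ P x z := fun x z => by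
      change ∑ y, margXZ P x z * lam z y = _
      rw [← Finset.mul_sum, hsum, mul_one]
    have hXY' : ∀ x y, margXY Q x y = margXY P x y := fun x y => (hXY x y).symm
    have hZ : ∀ z, margZ Q z = margZ P z := fun z => by
      rw [← sum_margXZ, ← sum_margXZ]
      exact Finset.sum_congr rfl fun x _ => hXZ x z
    have hYZ : ∀ y z, margYZ Q y z = margZ P z * lam z y := fun y z => by
      change ∑ x, margXZ P x z * lam z y = _
      rw [← Finset.sum_mul, sum_margXZ]
    have hmass : ∑ p, Q p = 1 := by
      rw [← hP.2]
      simp only [Fintype.sum_prod_type]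
      exact Finset.sum_congr rfl fun x _ => Finset.sum_congr rfl fun y _ => hXY' x y
    have hmem : Q ∈ ΔP P := ⟨⟨hQnn, hmass⟩, hXY', hXZ⟩
    have hzero : miXY_Z Q = 0 := by
      refine Finset.sum_eq_zero fun x _ => Finset.sum_eq_zero fun y _ =>
        Finset.sum_eq_zero fun z _ => ?_
      -- The ratio is `t / t`, hence `1` or, when `t = 0`, the junk value `0`; `log` kills both.
      have ht : Q (x, y, z) * margZ Q z = margXZ Q x z * margYZ Q y z := by
        rw [hZ, hXZ, hYZ]
        change margXZ P x z * lam z y * margZ P z = _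
        ring
      rw [ht]
      by_cases h0 : margXZ Q x z * margYZ Q y z = 0
      · simp [h0]
      · simp [div_self h0]
    have hlb : ∀ r ∈ miXY_Z '' ΔP P, 0 ≤ r := by
      rintro _ ⟨R, hR, rfl⟩
      exact miXY_Z_nonneg hR.1.1
    exact le_antisymm (csInf_le ⟨0, hlb⟩ ⟨Q, hmem, hzero⟩) (Real.sInf_nonneg hlb)

end PID
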